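/- Let S be an abelian subgroup of the Pauli group G_d^n with no nontrivial scalars and Nat.card S = d^n, let ψ be a nonzero vector in Fix(S), and let w_1, …, w_K ∈ G_d^n with w_1 = 1 be such that the vectors w_i.mulVec ψ are linearly independent over ℂ; let Q be their ℂ-span. For each i, let f_i : S → ZMod d be the function f_i(s) = ω(R(s), R(w_i)). If the set {f_1, …, f_K} is closed under pointwise addition (for all i, j there exists l with f_i + f_j = f_l), then Q is a stabilizer code: there exists an abelian subgroup H of G_d^n with no nontrivial scalars whose fixed subspace Fix(H) equals Q. -/

import Mathlib

open Matrix

noncomputable def q (d : ℕ) : ℂ := Complex.exp (2 * Real.pi * Complex.I / d)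

/-- Dot product of two vectors over `ZMod d`. -/
def dotp {n d : ℕ} (A B : Fin n → ZMod d) : ZMod d := ∑ i, A i * B i

/-- The Pauli word `W(U,V)` with entries `q^{⟨U,J⟩}` at `(J, K)` when `J = K + V`. -/
noncomputable def PauliWord (d n : ℕ) (U V : Fin n → ZMod d) :
    Matrix (Fin n → ZMod d) (Fin n → ZMod d) ℂ :=
  Matrix.of fun J K => if J = K + V then q d ^ (dotp U J).val else 0

/-- The n-qudit Pauli group, as a set of matrices. -/
noncomputable def PauliSet (d n : ℕ) : Set (Matrix (Fin n → ZMod d) (Fin n → ZMod d) ℂ) :=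
  {g | ∃ (k : ZMod d) (U V : Fin n → ZMod d), g = q d ^ k.val • PauliWord d n U V}

/-- The subspace of states fixed by every matrix in `S`. -/
noncomputable def FixSubspace (d n : ℕ) [NeZero d]
    (S : Set (Matrix (Fin n → ZMod d) (Fin n → ZMod d) ℂ)) :
    Submodule ℂ ((Fin n → ZMod d) → ℂ) where
  carrier := {ψ | ∀ s ∈ S, s.mulVec ψ = ψ}
  add_mem' := by
    intro a b ha hb s hs
    simp [Matrix.mulVec_add, ha s hs, hb s hs]
  zero_mem' := by
    intro s hs
    simp [Matrix.mulVec_zero]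
  smul_mem' := by
    intro c a ha s hs
    simp [Matrix.mulVec_smul, ha s hs]


/-- The symplectic product `ω((U1,U2),(V1,V2)) = ⟨U1,V2⟩ - ⟨U2,V1⟩`. -/
def symp {n d : ℕ} (x y : (Fin n → ZMod d) × (Fin n → ZMod d)) : ZMod d :=
  dotp x.1 y.2 - dotp x.2 y.1

noncomputable def ee (d : ℕ) (x : ZMod d) : ℂ := q d ^ x.val

lemma q_prim (d : ℕ) [NeZero d] : IsPrimitiveRoot (q d) d := by
  have := Complex.isPrimitiveRoot_exp d (NeZero.ne d)
  simpa [q] using this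

lemma ee_zero (d : ℕ) [NeZero d] : ee d 0 = 1 := by simp [ee]

lemma ee_add (d : ℕ) [NeZero d] (x y : ZMod d) : ee d (x + y) = ee d x * ee d y := by
  unfold ee
  rw [ZMod.val_add, ← pow_add, ← pow_mod_orderOf (q d) (x.val + y.val), ← (q_prim d).eq_orderOf]

lemma ee_eq_one (d : ℕ) [NeZero d] (x : ZMod d) (h : ee d x = 1) : x = 0 := by
  have h1 := (q_prim d).dvd_of_pow_eq_one _ h
  have h2 := Nat.eq_zero_of_dvd_of_lt h1 (ZMod.val_lt x)
  exact (ZMod.val_eq_zero x).1 h2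

/-- A sum which is multiplied by `c ≠ 1` under an injective self-map vanishes. -/
lemma sum_zero_of_shift {α : Type*} [DecidableEq α] (A : Finset α) (t : α → α)
    (ht : ∀ a ∈ A, t a ∈ A) (hinj : ∀ a ∈ A, ∀ b ∈ A, t a = t b → a = b)
    (F : α → ℂ) (c : ℂ) (hc : c ≠ 1) (hF : ∀ a ∈ A, F (t a) = c * F a) :
    ∑ a ∈ A, F a = 0 := by
  have himg : A.image t = A := by
    apply Finset.eq_of_subset_of_card_le
    · intro x hx
      obtain ⟨a, ha, rfl⟩ := Finset.mem_image.1 hx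
      exact ht a ha
    · rw [Finset.card_image_of_injOn]
      intro a ha b hb h
      exact hinj a ha b hb h
  have h1 : ∑ a ∈ A, F a = c * ∑ a ∈ A, F a := by
    conv_lhs => rw [← himg]
    rw [Finset.sum_image (fun a ha b hb h => hinj a ha b hb h), Finset.mul_sum]
    exact Finset.sum_congr rfl hF
  have h2 : (1 - c) * ∑ a ∈ A, F a = 0 := by linear_combination h1
  rcases mul_eq_zero.1 h2 with h | h
  · exact absurd (by linear_combination -h) hc
  · exact h

lemma dotp_add_left {n d : ℕ} (A B C : Fin n → ZMod d) :
    dotp (A + B) C = dotp A C + dotp B C := by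
  simp [dotp, add_mul, Finset.sum_add_distrib]

lemma dotp_add_right {n d : ℕ} (A B C : Fin n → ZMod d) :
    dotp A (B + C) = dotp A B + dotp A C := by
  simp [dotp, mul_add, Finset.sum_add_distrib]

lemma dotp_neg_right {n d : ℕ} (A B : Fin n → ZMod d) :
    dotp A (-B) = - dotp A B := by
  simp [dotp]

lemma dotp_comm' {n d : ℕ} (A B : Fin n → ZMod d) : dotp A B = dotp B A := by
  simp [dotp, mul_comm]

lemma symp_add_left {n d : ℕ} (x y z : (Fin n → ZMod d) × (Fin n → ZMod d)) :
    symp (x + y) z = symp x z + symp y z := by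
  simp only [symp, Prod.fst_add, Prod.snd_add, dotp_add_left]; ring

lemma word_mul (d n : ℕ) [NeZero d] (U V U' V' : Fin n → ZMod d) :
    PauliWord d n U V * PauliWord d n U' V' =
      ee d (-dotp U' V) • PauliWord d n (U + U') (V + V') := by
  ext J L
  simp only [Matrix.mul_apply, PauliWord, Matrix.of_apply, Matrix.smul_apply, smul_eq_mul]
  rw [Finset.sum_eq_single (J - V)]
  · have hiff : (J - V = L + V') ↔ (J = L + (V + V')) := by
      rw [sub_eq_iff_eq_add, add_assoc, add_comm V' V]
    by_cases h : J = L + (V + V')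
    · rw [if_pos (by simp), if_pos (hiff.2 h), if_pos h]
      change ee d _ * ee d _ = ee d _ * ee d _
      rw [← ee_add, ← ee_add, sub_eq_add_neg, dotp_add_right, dotp_neg_right, dotp_add_left]
      congr 1; ring
    · rw [if_neg h, if_neg (fun h' => h (hiff.1 h'))]; simp
  · intro b _ hb
    rw [if_neg, zero_mul]
    intro h; apply hb; rw [h]; simp
  · simp

lemma smul_word_mul (d n : ℕ) [NeZero d] (k k' : ZMod d) (U V U' V' : Fin n → ZMod d) :
    (q d ^ k.val • PauliWord d n U V) * (q d ^ k'.val • PauliWord d n U' V') =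
      q d ^ (k + k' - dotp U' V).val • PauliWord d n (U + U') (V + V') := by
  rw [Matrix.smul_mul, Matrix.mul_smul, word_mul, smul_smul, smul_smul]
  congr 1
  change ee d _ * ee d _ * ee d _ = ee d _
  rw [← ee_add, ← ee_add]; congr 1; ring

lemma word_zero (d n : ℕ) [NeZero d] : PauliWord d n 0 0 = 1 := by
  ext J K
  simp [PauliWord, dotp, Matrix.one_apply]

lemma word_trace (d n : ℕ) [NeZero d] (U V : Fin n → ZMod d) (h : ¬ (U = 0 ∧ V = 0)) :
    (PauliWord d n U V).trace = 0 := by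
  classical
  simp only [Matrix.trace, Matrix.diag, PauliWord, Matrix.of_apply]
  by_cases hV : V = 0
  · subst hV
    have hU : U ≠ 0 := fun hU => h ⟨hU, rfl⟩
    obtain ⟨i, hi⟩ := Function.ne_iff.1 hU
    simp only [add_zero, if_true]
    apply sum_zero_of_shift Finset.univ (fun J => Pi.single i 1 + J) (by simp) (by simp)
      _ (ee d (U i))
    · intro h'; exact hi (ee_eq_one d _ h')
    · intro J _
      change ee d _ = ee d _ * ee d _
      rw [← ee_add, dotp_add_right]
      congr 2
      simp [dotp, Pi.single_apply]
  · apply Finset.sum_eq_zero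
    intro J _
    rw [if_neg]
    simpa using hV

lemma finrank_fix (d n : ℕ) [NeZero d] (H : Finset (Matrix (Fin n → ZMod d) (Fin n → ZMod d) ℂ))
    (hsub : (H : Set _) ⊆ PauliSet d n) (h1 : 1 ∈ H)
    (hmul : ∀ a ∈ H, ∀ b ∈ H, a * b ∈ H)
    (hinv : ∀ a ∈ H, ∃ b ∈ H, a * b = 1)
    (hscal : ∀ c : ℂ, c • (1 : Matrix (Fin n → ZMod d) (Fin n → ZMod d) ℂ) ∈ H →
      c • (1 : Matrix (Fin n → ZMod d) (Fin n → ZMod d) ℂ) = 1) :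
    H.card * Module.finrank ℂ (FixSubspace d n (H : Set _)) = d ^ n := by
  classical
  have hc : (H.card : ℂ) ≠ 0 := by
    exact_mod_cast (Finset.card_pos.2 ⟨1, h1⟩).ne'
  set M : Matrix (Fin n → ZMod d) (Fin n → ZMod d) ℂ := (H.card : ℂ)⁻¹ • ∑ h ∈ H, h with hM
  have hshift : ∀ a ∈ H, a * M = M := by
    intro a ha
    have hinj : ∀ x ∈ H, ∀ y ∈ H, a * x = a * y → x = y := by
      intro x _ y _ hxy
      obtain ⟨b, _, hb⟩ := hinv a ha
      have hb' : b * a = 1 := mul_eq_one_comm.1 hb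
      have := congrArg (b * ·) hxy
      simpa [← mul_assoc, hb'] using this
    have himg : H.image (a * ·) = H := by
      apply Finset.eq_of_subset_of_card_le
      · intro x hx
        obtain ⟨y, hy, rfl⟩ := Finset.mem_image.1 hx
        exact hmul a ha y hy
      · rw [Finset.card_image_of_injOn]
        intro x hx y hy h
        exact hinj x hx y hy h
    rw [hM, Matrix.mul_smul, Finset.mul_sum]
    congr 1
    conv_rhs => rw [← himg]
    rw [Finset.sum_image (fun x hx y hy h => hinj x hx y hy h)]
  have hproj : LinearMap.IsProj (FixSubspace d n (H : Set _)) (Matrix.toLin' M) := by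
    constructor
    · intro x s hs
      rw [Matrix.toLin'_apply, Matrix.mulVec_mulVec, hshift s hs]
    · intro x hx
      rw [Matrix.toLin'_apply, hM, Matrix.smul_mulVec, Matrix.sum_mulVec,
        Finset.sum_congr rfl (fun s hs => hx s hs)]
      rw [Finset.sum_const, ← Nat.cast_smul_eq_nsmul ℂ, smul_smul, inv_mul_cancel₀ hc, one_smul]
  have ht := hproj.trace
  rw [Matrix.trace_toLin'_eq] at ht
  have htr : M.trace = (H.card : ℂ)⁻¹ * (d : ℂ) ^ n := by
    rw [hM, Matrix.trace_smul, Matrix.trace_sum, smul_eq_mul]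
    congr 1
    rw [Finset.sum_eq_single_of_mem 1 h1]
    · simp [Matrix.trace_one, ZMod.card]
    · intro b hb hb1
      obtain ⟨k, U, V, rfl⟩ := hsub hb
      rw [Matrix.trace_smul, word_trace, smul_zero]
      rintro ⟨rfl, rfl⟩
      rw [word_zero] at hb hb1
      exact hb1 (hscal _ hb)
  rw [htr] at ht
  have : ((H.card * Module.finrank ℂ (FixSubspace d n (H : Set _)) : ℕ) : ℂ) = ((d ^ n : ℕ) : ℂ) := by
    push_cast
    rw [← ht, ← mul_assoc, mul_inv_cancel₀ hc, one_mul]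
  exact_mod_cast this

theorem cws_classical_group_is_stabilizer (d n K : ℕ) [NeZero d] (hd : 2 ≤ d) (hn : 1 ≤ n)
    (Rmap : Matrix (Fin n → ZMod d) (Fin n → ZMod d) ℂ →
      (Fin n → ZMod d) × (Fin n → ZMod d))
    (hR : ∀ (k : ZMod d) (U V : Fin n → ZMod d),
      Rmap (q d ^ k.val • PauliWord d n U V) = (U, V))
    (S : Set (Matrix (Fin n → ZMod d) (Fin n → ZMod d) ℂ))
    (hSsub : S ⊆ PauliSet d n)
    (hS1 : (1 : Matrix (Fin n → ZMod d) (Fin n → ZMod d) ℂ) ∈ S)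
    (hSmul : ∀ a ∈ S, ∀ b ∈ S, a * b ∈ S)
    (hSinv : ∀ a ∈ S, ∃ b ∈ S, a * b = 1)
    (hScomm : ∀ a ∈ S, ∀ b ∈ S, a * b = b * a)
    (hSscal : ∀ c : ℂ, c • (1 : Matrix (Fin n → ZMod d) (Fin n → ZMod d) ℂ) ∈ S →
      c • (1 : Matrix (Fin n → ZMod d) (Fin n → ZMod d) ℂ) = 1)
    (hcard : Nat.card S = d ^ n)
    (ψ : (Fin n → ZMod d) → ℂ) (hψS : ψ ∈ FixSubspace d n S) (hψ : ψ ≠ 0)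
    (hK : 0 < K)
    (w : Fin K → Matrix (Fin n → ZMod d) (Fin n → ZMod d) ℂ)
    (hw : ∀ i, w i ∈ PauliSet d n)
    (hw1 : w ⟨0, hK⟩ = 1)
    (hli : LinearIndependent ℂ (fun i => (w i).mulVec ψ))
    (hclosed : ∀ i j : Fin K, ∃ l : Fin K, ∀ s ∈ S,
      symp (Rmap s) (Rmap (w i)) + symp (Rmap s) (Rmap (w j)) =
        symp (Rmap s) (Rmap (w l))) :
    ∃ H : Set (Matrix (Fin n → ZMod d) (Fin n → ZMod d) ℂ),
      H ⊆ PauliSet d n ∧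
      (1 : Matrix (Fin n → ZMod d) (Fin n → ZMod d) ℂ) ∈ H ∧
      (∀ a ∈ H, ∀ b ∈ H, a * b ∈ H) ∧
      (∀ a ∈ H, ∃ b ∈ H, a * b = 1) ∧
      (∀ a ∈ H, ∀ b ∈ H, a * b = b * a) ∧
      (∀ c : ℂ, c • (1 : Matrix (Fin n → ZMod d) (Fin n → ZMod d) ℂ) ∈ H →
        c • (1 : Matrix (Fin n → ZMod d) (Fin n → ZMod d) ℂ) = 1) ∧
      FixSubspace d n H = Submodule.span ℂ (Set.range fun i => (w i).mulVec ψ) := by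
  classical
  have hne : Nat.card S ≠ 0 := by rw [hcard]; positivity
  have hfin : S.Finite := Set.finite_coe_iff.1 (Nat.finite_of_card_ne_zero hne)
  obtain ⟨T, rfl⟩ := hfin.exists_finset_coe
  have hTcard : T.card = d ^ n := by rw [← hcard]; simp
  -- group-theoretic facts on `Rmap`
  have hRmul : ∀ a ∈ PauliSet d n, ∀ b ∈ PauliSet d n, Rmap (a * b) = Rmap a + Rmap b := by
    rintro _ ⟨k, U, V, rfl⟩ _ ⟨k', U', V', rfl⟩
    rw [smul_word_mul, hR, hR, hR]; rfl
  have hcomm : ∀ a ∈ PauliSet d n, ∀ b ∈ PauliSet d n,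
      a * b = ee d (symp (Rmap a) (Rmap b)) • (b * a) := by
    rintro _ ⟨k, U, V, rfl⟩ _ ⟨k', U', V', rfl⟩
    rw [smul_word_mul, smul_word_mul, hR, hR, smul_smul, add_comm U' U, add_comm V' V]
    congr 1
    change ee d _ = ee d _ * ee d _
    rw [← ee_add]
    congr 1
    simp only [symp, dotp_comm' V U']
    ring
  have hR1 : Rmap 1 = 0 := by
    have := hR 0 0 0
    rw [word_zero, ZMod.val_zero, pow_zero, one_smul] at this
    exact this
  have hz : ∀ y : (Fin n → ZMod d) × (Fin n → ZMod d), symp 0 y = 0 := by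
    intro y; simp [symp, dotp]
  have hz' : ∀ y : (Fin n → ZMod d) × (Fin n → ZMod d), symp y 0 = 0 := by
    intro y; simp [symp, dotp]
  let f : Fin K → T → ZMod d := fun i s => symp (Rmap s) (Rmap (w i))
  let C : Finset (T → ZMod d) := Finset.univ.image f
  have hCK : C.card ≤ K := by
    simpa using (Finset.card_image_le (s := Finset.univ) (f := f))
  have hC0 : (0 : T → ZMod d) ∈ C := by
    refine Finset.mem_image.2 ⟨⟨0, hK⟩, Finset.mem_univ _, ?_⟩
    funext s
    simp [f, hw1, hR1, hz']
  have hCadd : ∀ a ∈ C, ∀ b ∈ C, a + b ∈ C := by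
    intro a ha b hb
    obtain ⟨i, _, rfl⟩ := Finset.mem_image.1 ha
    obtain ⟨j, _, rfl⟩ := Finset.mem_image.1 hb
    obtain ⟨l, hl⟩ := hclosed i j
    refine Finset.mem_image.2 ⟨l, Finset.mem_univ _, ?_⟩
    funext s
    exact (hl s s.2).symm
  have hsymp : ∀ a ∈ T, ∀ b ∈ T, ∀ y, symp (Rmap (a * b)) y = symp (Rmap a) y + symp (Rmap b) y := by
    intro a ha b hb y
    rw [hRmul a (hSsub ha) b (hSsub hb), symp_add_left]
  let H := T.filter (fun s => ∀ i, symp (Rmap s) (Rmap (w i)) = 0)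
  have hHT : ∀ s ∈ H, s ∈ T := fun s hs => (Finset.mem_filter.1 hs).1
  have hH1 : 1 ∈ H := Finset.mem_filter.2 ⟨hS1, fun i => by rw [hR1, hz]⟩
  have hHmul : ∀ a ∈ H, ∀ b ∈ H, a * b ∈ H := by
    intro a ha b hb
    obtain ⟨ha, ha'⟩ := Finset.mem_filter.1 ha
    obtain ⟨hb, hb'⟩ := Finset.mem_filter.1 hb
    exact Finset.mem_filter.2 ⟨hSmul a ha b hb, fun i => by
      rw [hsymp a ha b hb, ha', hb', add_zero]⟩
  have hHinv : ∀ a ∈ H, ∃ b ∈ H, a * b = 1 := by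
    intro a ha
    obtain ⟨ha, ha'⟩ := Finset.mem_filter.1 ha
    obtain ⟨b, hb, hab⟩ := hSinv a ha
    refine ⟨b, Finset.mem_filter.2 ⟨hb, fun i => ?_⟩, hab⟩
    have h := hsymp a ha b hb (Rmap (w i))
    rw [hab, hR1, hz, ha', zero_add] at h
    exact h.symm
  have hHscal : ∀ c : ℂ, c • (1 : Matrix (Fin n → ZMod d) (Fin n → ZMod d) ℂ) ∈ H →
      c • (1 : Matrix (Fin n → ZMod d) (Fin n → ZMod d) ℂ) = 1 :=
    fun c hc => hSscal c (hHT _ hc)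
  have hHsub : (H : Set _) ⊆ PauliSet d n := fun s hs => hSsub (hHT s hs)
  -- double counting
  have hsum1 : ∑ s : T, ∑ c ∈ C, ee d (c s) = (H.card : ℂ) * C.card := by
    have hin : ∀ s : T, ∑ c ∈ C, ee d (c s) =
        if (∀ i, symp (Rmap s.1) (Rmap (w i)) = 0) then (C.card : ℂ) else 0 := by
      intro s
      split_ifs with h
      · rw [Finset.sum_congr rfl (g := fun _ => (1 : ℂ))]
        · simp
        · intro c hc
          obtain ⟨i, _, rfl⟩ := Finset.mem_image.1 hc
          simp only [f, h i, ee_zero]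
      · push Not at h
        obtain ⟨i, hi⟩ := h
        apply sum_zero_of_shift C (fun c => f i + c)
          (fun c hc => hCadd _ (Finset.mem_image_of_mem _ (Finset.mem_univ _)) _ hc)
          (fun a _ b _ h => add_left_cancel h) _ (ee d (f i s))
          (fun h => hi (ee_eq_one d _ h))
        intro c _
        rw [← ee_add]; rfl
    rw [Finset.sum_congr rfl (fun s _ => hin s),
      Finset.sum_coe_sort T (fun s => if (∀ i, symp (Rmap s) (Rmap (w i)) = 0)
        then (C.card : ℂ) else 0), ← Finset.sum_filter, Finset.sum_const, nsmul_eq_mul]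
  have hsum2 : ∑ s : T, ∑ c ∈ C, ee d (c s) = (T.card : ℂ) := by
    rw [Finset.sum_comm, Finset.sum_eq_single_of_mem 0 hC0]
    · simp [ee_zero]
    · intro c hc hc0
      obtain ⟨i, _, rfl⟩ := Finset.mem_image.1 hc
      obtain ⟨s, hs⟩ := Function.ne_iff.1 hc0
      apply sum_zero_of_shift Finset.univ
        (fun t : T => (⟨s.1 * t.1, hSmul _ s.2 _ t.2⟩ : T)) (by simp) _ _ (ee d (f i s))
        (fun h => hs (ee_eq_one d _ h))
      · intro t _
        rw [← ee_add]
        congr 1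
        exact hsymp _ s.2 _ t.2 _
      · intro a _ b _ hab
        have hab' : s.1 * a.1 = s.1 * b.1 := congrArg Subtype.val hab
        obtain ⟨r, _, hr⟩ := hSinv s.1 s.2
        have hr' : r * s.1 = 1 := mul_eq_one_comm.1 hr
        have := congrArg (r * ·) hab'
        apply Subtype.ext
        simpa [← mul_assoc, hr'] using this
  have hcount : H.card * C.card = d ^ n := by
    rw [← hTcard]
    exact_mod_cast hsum1.symm.trans hsum2
  have hdim := finrank_fix d n H hHsub hH1 hHmul hHinv hHscal
  have hfr : Module.finrank ℂ (FixSubspace d n (H : Set _)) = C.card :=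
    Nat.eq_of_mul_eq_mul_left (Finset.card_pos.2 ⟨1, hH1⟩) (hdim.trans hcount.symm)
  refine ⟨H, hHsub, hH1, hHmul, hHinv, fun a ha b hb => hScomm a (hHT a ha) b (hHT b hb),
    hHscal, ?_⟩
  symm
  apply Submodule.eq_of_le_of_finrank_le
  · rw [Submodule.span_le]
    rintro _ ⟨i, rfl⟩ s hs
    have hs' := (Finset.mem_filter.1 hs).2 i
    have hst := hHT s hs
    change s.mulVec ((w i).mulVec ψ) = (w i).mulVec ψ
    rw [Matrix.mulVec_mulVec, hcomm s (hSsub hst) (w i) (hw i), hs', ee_zero, one_smul,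
      ← Matrix.mulVec_mulVec, hψS s hst]
  · rw [hfr, finrank_span_eq_card hli, Fintype.card_fin]
    exact hCK
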